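/- arXiv:0710.2884 — 3 statements merged into one kernel-verified Lean document; each statement's English description precedes it below -/
import Mathlib

section
/- Let X be a metric space, x₀ ∈ X. For ε > 0 define λ_ε(x₀) as the supremum of reals l ≤ 1 such that there exists an ε-chain (x_0', ..., x_n') in X containing x₀ with d(x_0', x_n') ≥ l, and λ(x₀) = inf over ε > 0 of λ_ε(x₀). If X is countable and λ(x₀) > 0 for some x₀ ∈ X, then X is divisible: there exists a partition of X into two pieces neither of which contains an isometric copy of X. -/
/-- The set of reals `l ≤ 1` such that there is an `ε`-chain containing `x₀` whose
endpoints are at distance at least `l`. -/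
def chainLengths {X : Type*} [MetricSpace X] (x₀ : X) (ε : ℝ) : Set ℝ :=
  {l | l ≤ 1 ∧ ∃ (n : ℕ) (c : ℕ → X),
    (∀ i < n, dist (c i) (c (i + 1)) ≤ ε) ∧ (∃ i ≤ n, c i = x₀) ∧
    l ≤ dist (c 0) (c n)}

lemma aux_chain {X : Type*} [MetricSpace X] (x₀ : X)
    (h : 0 < ⨅ ε : {e : ℝ // 0 < e}, sSup (chainLengths x₀ ε.1)) :
    ∃ r : ℝ, 0 < r ∧ ∀ ε : ℝ, 0 < ε → ∃ (n : ℕ) (c : ℕ → X),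
      c 0 = x₀ ∧ (∀ i < n, dist (c i) (c (i + 1)) ≤ ε) ∧ r ≤ dist (c 0) (c n) := by
  set L := ⨅ ε : {e : ℝ // 0 < e}, sSup (chainLengths x₀ ε.1) with hL
  have hb : BddBelow (Set.range fun ε : {e : ℝ // 0 < e} => sSup (chainLengths x₀ ε.1)) := by
    by_contra hb
    have : L = 0 := Real.sInf_of_not_bddBelow hb
    linarith
  refine ⟨L / 4, by linarith, fun ε hε => ?_⟩
  have h1 : L ≤ sSup (chainLengths x₀ ε) := ciInf_le hb (⟨ε, hε⟩ : {e : ℝ // 0 < e})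
  have h2 : ∃ l ∈ chainLengths x₀ ε, L / 2 < l := by
    by_contra! hn
    have := Real.sSup_le hn (by linarith)
    linarith
  obtain ⟨l, ⟨-, n, c, hc, ⟨i, hi, hix⟩, hl⟩, hlt⟩ := h2
  by_cases hd : L / 4 ≤ dist x₀ (c n)
  · refine ⟨n - i, fun j => c (i + j), by simpa using hix, fun j hj => ?_, ?_⟩
    · exact hc (i + j) (by omega)
    · simpa [hix, Nat.add_sub_cancel' hi] using hd
  · refine ⟨i, fun j => c (i - j), by simpa using hix, fun j hj => ?_, ?_⟩
    · have := hc (i - (j + 1)) (by omega)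
      rw [dist_comm]
      rwa [show i - (j + 1) + 1 = i - j by omega] at this
    · have := dist_triangle (c 0) x₀ (c n)
      simp only [Nat.sub_zero, Nat.sub_self, hix]
      rw [dist_comm]
      linarith

lemma aux_partition {X : Type*} [MetricSpace X] [Countable X] [Nonempty X]
    (r : ℝ) (hr : 0 < r) :
    ∃ p : X → ℕ, (∀ x y, p x = p y → dist x y < r) ∧
      ∀ x, ∀ᶠ z in nhds x, p z = p x := by
  classical
  obtain ⟨y, hy⟩ := exists_surjective_nat X
  have hs : ∀ n, ∃ s : ℝ, 0 < s ∧ s < r / 2 ∧ ∀ x, dist x (y n) ≠ s := by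
    intro n
    have hc : (Set.range fun x => dist x (y n)).Countable := Set.countable_range _
    have hne : ¬ (Set.Ioo 0 (r / 2) ⊆ Set.range fun x => dist x (y n)) := by
      intro hsub
      have h1 := hc.mono hsub
      exact (Cardinal.Real.Ioo_countable_iff.not.2 (by linarith)) h1
    obtain ⟨s, hs, hs'⟩ := Set.not_subset.1 hne
    exact ⟨s, hs.1, hs.2, fun x hx => hs' ⟨x, hx⟩⟩
  choose s hs0 hsr hsd using hs
  have hex : ∀ x, ∃ n, dist x (y n) < s n := by
    intro x
    obtain ⟨n, rfl⟩ := hy x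
    exact ⟨n, by simpa using hs0 n⟩
  refine ⟨fun x => Nat.find (hex x), ?_, ?_⟩
  · intro a b hab
    have ha := Nat.find_spec (hex a)
    have hb := Nat.find_spec (hex b)
    simp only at hab
    rw [← hab] at hb
    have := dist_triangle_right a b (y (Nat.find (hex a)))
    have := hsr (Nat.find (hex a))
    linarith
  · intro x
    have key : ∀ m, ∀ᶠ z in nhds x, (dist z (y m) < s m ↔ dist x (y m) < s m) := by
      intro m
      have hcont : Continuous fun z => dist z (y m) := by fun_prop
      rcases lt_or_gt_of_ne (hsd m x) with hlt | hgt
      · filter_upwards [hcont.continuousAt.eventually_lt_const hlt] with z hz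
        exact ⟨fun _ => hlt, fun _ => hz⟩
      · filter_upwards [hcont.continuousAt.eventually_const_lt hgt] with z hz
        exact ⟨fun hh => absurd hh hz.le.not_gt, fun hh => absurd hh hgt.le.not_gt⟩
    have hall : ∀ᶠ z in nhds x, ∀ m ∈ Finset.range (Nat.find (hex x) + 1),
        (dist z (y m) < s m ↔ dist x (y m) < s m) :=
      (Filter.eventually_all_finset _).2 fun m _ => key m
    filter_upwards [hall] with z hz
    rw [Nat.find_eq_iff]
    refine ⟨(hz _ (by simp)).2 (Nat.find_spec (hex x)), fun m hm => ?_⟩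
    rw [hz m (Finset.mem_range.2 (Nat.lt_succ_of_lt hm))]
    exact Nat.find_min (hex x) hm

/-- If `X` is a countable metric space and `λ(x₀) = inf_{ε > 0} λ_ε(x₀) > 0` for some
`x₀ ∈ X`, where `λ_ε(x₀)` is the supremum of lengths of `ε`-chains through `x₀`,
then `X` is divisible: some partition of `X` into two pieces is such that neither
piece contains an isometric copy of `X`. -/
theorem lambda_positive_implies_divisible {X : Type*} [MetricSpace X] [Countable X]
    (x₀ : X)
    (h : 0 < ⨅ ε : {e : ℝ // 0 < e}, sSup (chainLengths x₀ ε.1)) :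
    ∃ A : Set X,
      ¬ (∃ e : X → X, Isometry e ∧ Set.range e ⊆ A) ∧
      ¬ (∃ e : X → X, Isometry e ∧ Set.range e ⊆ Aᶜ) := by
  classical
  obtain ⟨r, hr, hchain⟩ := aux_chain x₀ h
  haveI : Nonempty X := ⟨x₀⟩
  obtain ⟨p, hp, hloc⟩ := aux_partition (X := X) r hr
  have hne : ∀ x, {z | p z ≠ p x}.Nonempty := by
    intro x
    obtain ⟨n, c, -, -, hd⟩ := hchain 1 one_pos
    by_contra hemp
    rw [Set.not_nonempty_iff_eq_empty, Set.eq_empty_iff_forall_notMem] at hemp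
    have h0 := hemp (c 0)
    have h1 := hemp (c n)
    simp only [Set.mem_ofPred_eq, not_not] at h0 h1
    have := hp _ _ (h0.trans h1.symm)
    linarith
  set G : X → ℝ := fun x => Metric.infDist x {z | p z ≠ p x} with hG
  have hGpos : ∀ x, 0 < G x := by
    intro x
    obtain ⟨δ, hδ, hball⟩ := Metric.eventually_nhds_iff.1 (hloc x)
    refine lt_of_lt_of_le hδ ((Metric.le_infDist (hne x)).2 fun z hz => ?_)
    by_contra! hlt
    exact hz (hball (by rwa [dist_comm]))
  have hGle : ∀ x z, p z ≠ p x → G x ≤ dist x z := fun x z hz =>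
    Metric.infDist_le_dist_of_mem hz
  have hGlip : ∀ x z, G x ≤ G z + dist x z := by
    intro x z
    by_cases hxz : p z = p x
    · simp only [hG, hxz]
      exact Metric.infDist_le_infDist_add_dist
    · have := hGle x z hxz
      have := hGpos z
      linarith
  have main : ∀ e : X → X, Isometry e → ∀ b, 0 < b → b ≤ G (e x₀) →
      ∃ x, b / 2 ≤ G (e x) ∧ G (e x) < b := by
    intro e he b hb hbG
    obtain ⟨n, c, hc0, hc, hd⟩ := hchain (b / 2) (by linarith)
    have hex1 : ∃ j, p (e (c j)) ≠ p (e (c 0)) ∧ j ≤ n := by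
      refine ⟨n, fun heq => ?_, le_rfl⟩
      have := hp _ _ heq.symm
      rw [he.dist_eq] at this
      linarith
    have hex2 : ∃ j, G (e (c j)) < b ∧ j ≤ n := by
      have h1 := Nat.find_spec hex1
      have h2 := fun m => @Nat.find_min _ _ hex1 m
      rcases hk : Nat.find hex1 with _ | k
      · rw [hk] at h1
        exact absurd rfl h1.1
      · rw [hk] at h1 h2
        have h3 := h2 k (by omega)
        have h4 : p (e (c k)) = p (e (c 0)) := by
          by_contra hh
          exact h3 ⟨hh, by omega⟩
        refine ⟨k, ?_, by omega⟩
        have h5 := hGle (e (c k)) (e (c (k + 1))) (by rw [h4]; exact h1.1)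
        rw [he.dist_eq] at h5
        have := hc k (by omega)
        linarith
    have h1 := Nat.find_spec hex2
    have h2 := fun m => @Nat.find_min _ _ hex2 m
    rcases hk : Nat.find hex2 with _ | k
    · rw [hk, hc0] at h1
      linarith [h1.1]
    · rw [hk] at h1 h2
      have h3 := h2 k (by omega)
      have h4 : b ≤ G (e (c k)) := by
        by_contra! hh
        exact h3 ⟨hh, by omega⟩
      refine ⟨c (k + 1), ?_, h1.1⟩
      have h5 := hGlip (e (c k)) (e (c (k + 1)))
      rw [he.dist_eq] at h5
      have := hc k (by omega)
      linarith
  have main2 : ∀ e : X → X, Isometry e → ∀ k : ℤ, k < Int.log 2 (G (e x₀)) →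
      ∃ x, Int.log 2 (G (e x)) = k := by
    intro e he k hk
    obtain ⟨x, hx1, hx2⟩ := main e he ((2 : ℝ) ^ (k + 1)) (by positivity) (by
      have h1 := (Int.zpow_le_iff_le_log (b := 2) one_lt_two (hGpos (e x₀))
        (x := k + 1)).2 (by omega)
      exact_mod_cast h1)
    refine ⟨x, le_antisymm ?_ ?_⟩
    · have := (Int.lt_zpow_iff_log_lt (b := 2) one_lt_two (hGpos (e x))
        (x := k + 1)).1 (by exact_mod_cast hx2)
      omega
    · refine (Int.zpow_le_iff_le_log (b := 2) one_lt_two (hGpos (e x))).1 ?_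
      rw [zpow_add_one₀ two_ne_zero] at hx1
      push_cast
      linarith
  refine ⟨{x | Even (Int.log 2 (G x))}, ?_, ?_⟩
  · rintro ⟨e, he, hsub⟩
    obtain ⟨x, hx⟩ := main2 e he (2 * (-|Int.log 2 (G (e x₀))| - 1) + 1)
      (by have := neg_abs_le (Int.log 2 (G (e x₀)))
          have := abs_nonneg (Int.log 2 (G (e x₀)))
          omega)
    have h1 : Even (Int.log 2 (G (e x))) := hsub ⟨x, rfl⟩
    rw [hx] at h1
    exact (Int.not_even_iff_odd.2 ⟨_, rfl⟩) h1
  · rintro ⟨e, he, hsub⟩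
    obtain ⟨x, hx⟩ := main2 e he (2 * (-|Int.log 2 (G (e x₀))| - 1))
      (by have := neg_abs_le (Int.log 2 (G (e x₀)))
          have := abs_nonneg (Int.log 2 (G (e x₀)))
          omega)
    have h1 : ¬ Even (Int.log 2 (G (e x))) := hsub ⟨x, rfl⟩
    rw [hx] at h1
    exact h1 (even_two_mul _)
end

section
/- The space U_m is indivisible: for every partition of U_m into finitely many pieces, one piece contains an isometric copy of U_m. -/
/-- `g` is a Katetov function on the finite set `W`, with values in `[1,m]`. -/
def UK {X : Type} (d : X → X → ℕ) (m : ℕ) (W : Finset X) (g : X → ℕ) : Prop :=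
  (∀ a ∈ W, 1 ≤ g a ∧ g a ≤ m) ∧ ∀ a ∈ W, ∀ b ∈ W, g a ≤ g b + d a b ∧ d a b ≤ g a + g b

/-- Integer valued version of the metric structure of `U_m`. -/
structure UMS {X : Type} (d : X → X → ℕ) (m : ℕ) : Prop where
  self : ∀ x, d x x = 0
  comm : ∀ x y, d x y = d y x
  tri : ∀ x y z, d x z ≤ d x y + d y z
  le_m : ∀ x y, d x y ≤ m
  eq : ∀ x y, d x y = 0 → x = y
  ep : ∀ W g, UK d m W g → ∃ x, ∀ a ∈ W, d x a = g a

/-- `(W', g')` extends `(W, g)`, with values at least `r`. -/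
def UExt {X : Type} (d : X → X → ℕ) (m r : ℕ) (W : Finset X) (g : X → ℕ)
    (W' : Finset X) (g' : X → ℕ) : Prop :=
  W ⊆ W' ∧ (∀ a ∈ W, g' a = g a) ∧ UK d m W' g' ∧ ∀ a ∈ W', r ≤ g' a

/-- Largeness of `Γ` relative to the type `(W, g)` at level `r`. -/
def ULarge {X : Type} (d : X → X → ℕ) (m : ℕ) (Γ : Set X) :
    ℕ → Finset X → (X → ℕ) → Prop
  | 0, W, g => ∃ x ∈ Γ, ∀ a ∈ W, d x a = g a
  | r + 1, W, g => ∀ W' g', UExt d m (r + 1) W g W' g' →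
      ∃ W'' g'', UExt d m r W' g' W'' g'' ∧ ULarge d m Γ r W'' g''

theorem UExt.trans {X : Type} {d : X → X → ℕ} {m r s t : ℕ} {W₁ W₂ W₃ : Finset X}
    {g₁ g₂ g₃ : X → ℕ} (h₁ : UExt d m s W₁ g₁ W₂ g₂) (h₂ : UExt d m r W₂ g₂ W₃ g₃)
    (h : t ≤ r) : UExt d m t W₁ g₁ W₃ g₃ := by
  obtain ⟨a1, a2, a3, a4⟩ := h₁
  obtain ⟨b1, b2, b3, b4⟩ := h₂
  refine ⟨a1.trans b1, fun a ha => ?_, b3, fun a ha => h.trans (b4 a ha)⟩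
  rw [b2 a (a1 ha), a2 a ha]

theorem UExt.refl {X : Type} {d : X → X → ℕ} {m r : ℕ} {W : Finset X} {g : X → ℕ}
    (hK : UK d m W g) (hr : ∀ a ∈ W, r ≤ g a) : UExt d m r W g W g :=
  ⟨subset_rfl, fun _ _ => rfl, hK, hr⟩

theorem ULarge.ext {X : Type} {d : X → X → ℕ} {m : ℕ} {Γ : Set X} {r : ℕ} {W W' : Finset X}
    {g g' : X → ℕ} (hr : 1 ≤ r) (h : ULarge d m Γ r W g) (he : UExt d m r W g W' g') :
    ULarge d m Γ r W' g' := by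
  cases r with
  | zero => omega
  | succ r =>
    intro W₂ g₂ h₂
    exact h W₂ g₂ (he.trans h₂ le_rfl)

theorem ULarge.exists {X : Type} {d : X → X → ℕ} {m : ℕ} {Γ : Set X} (r : ℕ) {W : Finset X}
    {g : X → ℕ} (h : ULarge d m Γ r W g) (hK : UK d m W g) (hr : ∀ a ∈ W, r ≤ g a) :
    ∃ x ∈ Γ, ∀ a ∈ W, d x a = g a := by
  induction r generalizing W g with
  | zero => exact h
  | succ r ih =>
    obtain ⟨W₂, g₂, h₂, hL⟩ := h W g (UExt.refl hK hr)
    obtain ⟨x, hx, hxa⟩ := ih hL h₂.2.2.1 h₂.2.2.2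
    exact ⟨x, hx, fun a ha => by rw [hxa a (h₂.1 ha), h₂.2.1 a ha]⟩

theorem ULarge.union {X : Type} {d : X → X → ℕ} {m : ℕ} {Γ Δ : Set X} (r : ℕ)
    {W : Finset X} {g : X → ℕ} (h : ULarge d m (Γ ∪ Δ) r W g) (hK : UK d m W g)
    (hr : ∀ a ∈ W, r ≤ g a) :
    ∃ W' g', UExt d m r W g W' g' ∧ (ULarge d m Γ r W' g' ∨ ULarge d m Δ r W' g') := by
  induction r generalizing W g with
  | zero =>
    obtain ⟨x, hx, hxa⟩ := h
    refine ⟨W, g, UExt.refl hK hr, ?_⟩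
    rcases hx with hx | hx
    · exact Or.inl ⟨x, hx, hxa⟩
    · exact Or.inr ⟨x, hx, hxa⟩
  | succ r ih =>
    by_cases hG : ULarge d m Γ (r + 1) W g
    · exact ⟨W, g, UExt.refl hK hr, Or.inl hG⟩
    · have hG' : ∃ W' g', UExt d m (r + 1) W g W' g' ∧
          ∀ W'' g'', UExt d m r W' g' W'' g'' → ¬ ULarge d m Γ r W'' g'' := by
        by_contra hcon
        push Not at hcon
        exact hG fun W' g' he => hcon W' g' he
      obtain ⟨W₁, g₁, h₁, hn⟩ := hG'
      refine ⟨W₁, g₁, h₁, Or.inr ?_⟩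
      intro W₂ g₂ h₂
      obtain ⟨W₃, g₃, h₃, hL₃⟩ := h W₂ g₂ (h₁.trans h₂ le_rfl)
      obtain ⟨W₄, g₄, h₄, hL₄⟩ := ih hL₃ h₃.2.2.1 h₃.2.2.2
      have h24 : UExt d m r W₂ g₂ W₄ g₄ := h₃.trans h₄ le_rfl
      rcases hL₄ with hL | hL
      · exact absurd hL (hn W₄ g₄ (h₂.trans h24 le_rfl))
      · exact ⟨W₄, g₄, h24, hL⟩

theorem ULarge.univ {X : Type} {d : X → X → ℕ} {m : ℕ} (hM : UMS d m) (r : ℕ)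
    {W : Finset X} {g : X → ℕ} (hK : UK d m W g) : ULarge d m Set.univ r W g := by
  induction r generalizing W g with
  | zero =>
    obtain ⟨x, hx⟩ := hM.ep W g hK
    exact ⟨x, trivial, hx⟩
  | succ r ih =>
    intro W' g' h'
    exact ⟨W', g', UExt.refl h'.2.2.1 fun a ha => (Nat.le_succ r).trans (h'.2.2.2 a ha),
      ih h'.2.2.1⟩

theorem ULarge.color {X : Type} {d : X → X → ℕ} {m k : ℕ} (c : X → Fin k)
    (r : ℕ) (s : Finset (Fin k)) :
    ∀ (W : Finset X) (g : X → ℕ), ULarge d m {x | c x ∈ s} r W g → UK d m W g →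
    (∀ a ∈ W, r ≤ g a) → ∃ i, ∃ W' g', UExt d m r W g W' g' ∧
      ULarge d m {x | c x = i} r W' g' := by
  induction s using Finset.induction_on with
  | empty =>
    intro W g h hK hr
    obtain ⟨x, hx, _⟩ := h.exists r hK hr
    simp at hx
  | insert i s his ih =>
    intro W g h hK hr
    have : {x | c x ∈ insert i s} = {x | c x = i} ∪ {x | c x ∈ s} := by
      ext x; simp
    rw [this] at h
    obtain ⟨W₁, g₁, h₁, hL⟩ := h.union r hK hr
    rcases hL with hL | hL
    · exact ⟨i, W₁, g₁, h₁, hL⟩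
    · obtain ⟨j, W₂, g₂, h₂, hL₂⟩ := ih W₁ g₁ hL h₁.2.2.1 h₁.2.2.2
      exact ⟨j, W₂, g₂, h₁.trans h₂ le_rfl, hL₂⟩

theorem ubound_exists {X : Type} (m B : ℕ) (W : Finset X) (h : X → ℕ) :
    ∃ v, v ≤ m ∧ v ≤ B ∧ (∀ a ∈ W, v ≤ h a) ∧ (v = m ∨ v = B ∨ ∃ a ∈ W, v = h a) := by
  classical
  induction W using Finset.induction_on with
  | empty =>
    refine ⟨min m B, by omega, by omega, by simp, by omega⟩
  | insert b W hb ih =>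
    obtain ⟨v, h1, h2, h3, h4⟩ := ih
    by_cases hv : v ≤ h b
    · refine ⟨v, h1, h2, ?_, ?_⟩
      · intro a ha
        rcases Finset.mem_insert.1 ha with rfl | ha
        · exact hv
        · exact h3 a ha
      · rcases h4 with h | h | ⟨a, ha, h⟩
        · exact Or.inl h
        · exact Or.inr (Or.inl h)
        · exact Or.inr (Or.inr ⟨a, Finset.mem_insert_of_mem ha, h⟩)
    · refine ⟨h b, by omega, by omega, ?_, Or.inr (Or.inr ⟨b, Finset.mem_insert_self _ _, rfl⟩)⟩
      intro a ha
      rcases Finset.mem_insert.1 ha with rfl | ha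
      · exact le_rfl
      · have := h3 a ha
        omega

/-- A coherent configuration of large types over `W`. -/
structure UConf {X I : Type} (d : X → X → ℕ) (m : ℕ) (Γ : Set X) (D E : I → I → ℕ)
    (W : Finset X) (g : I → X → ℕ) (lev : I → ℕ) : Prop where
  fK : ∀ i, UK d m W (g i)
  fone : ∀ i, 1 ≤ lev i
  flm : ∀ i, lev i ≤ m
  flev : ∀ i, ∀ a ∈ W, lev i ≤ g i a
  fD : ∀ i j, ∀ a ∈ W, g i a ≤ g j a + D i j
  fE : ∀ i j, ∀ a ∈ W, E i j ≤ g i a + g j a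
  fL : ∀ i, ULarge d m Γ (lev i) W (g i)

theorem UConf.step {X I : Type} [DecidableEq I] {d : X → X → ℕ} {m : ℕ} (hM : UMS d m)
    {Γ : Set X} {D E : I → I → ℕ} {W : Finset X} {g : I → X → ℕ} {lev : I → ℕ}
    (hC : UConf d m Γ D E W g lev)
    (D0 : ∀ i, D i i = 0) (Dc : ∀ i j, D i j = D j i) (Dt : ∀ i j k, D i k ≤ D i j + D j k)
    (Em : ∀ i j, E i j ≤ m)
    (i : I) (σ : ℕ) (hi : lev i = σ + 1) (hσ : 1 ≤ σ) (hlev : ∀ j, j ≠ i → lev j ≤ σ + D i j)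
    (hE : ∀ j l, E j l ≤ 2 * σ + D i j + D i l) :
    ∃ W' g', W ⊆ W' ∧ (∀ j, ∀ a ∈ W, g' j a = g j a) ∧
      UConf d m Γ D E W' g' (Function.update lev i σ) := by
  have hLi := hC.fL i
  rw [hi] at hLi
  obtain ⟨W', q, hq, hqL⟩ := hLi W (g i) (UExt.refl (hC.fK i) (by rw [← hi]; exact hC.flev i))
  obtain ⟨hWW, hqg, hqK, hqσ⟩ := hq
  have hex := fun (j : I) (z : X) => ubound_exists m (q z + D i j) W (fun a => g j a + d a z)
  choose G Gm GB GW Gc using hex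
  have hGg : ∀ j, ∀ z ∈ W, G j z = g j z := by
    intro j z hz
    apply le_antisymm
    · have := GW j z z hz
      simpa [hM.self] using this
    · rcases Gc j z with h | h | ⟨a, ha, h⟩
      · rw [h]; exact ((hC.fK j).1 z hz).2
      · rw [h, hqg z hz, Dc]; exact hC.fD j i z hz
      · have h1 := ((hC.fK j).2 z hz a ha).1
        rw [hM.comm z a] at h1
        omega
  have hGq : ∀ z ∈ W', G i z = q z := by
    intro z hz
    apply le_antisymm
    · have := GB i z
      simpa [D0] using this
    · rcases Gc i z with h | h | ⟨a, ha, h⟩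
      · rw [h]; exact (hqK.1 z hz).2
      · omega
      · have h1 := (hqK.2 z hz a (hWW ha)).1
        rw [hM.comm z a, hqg a ha] at h1
        omega
  have hone : ∀ j, ∀ a ∈ W', 1 ≤ G j a := by
    intro j z hz
    have h0 := hqK.1 z hz
    rcases Gc j z with h | h | ⟨a, ha, h⟩
    · omega
    · omega
    · have := ((hC.fK j).1 a ha).1
      omega
  have hK : ∀ j, UK d m W' (G j) := by
    intro j
    refine ⟨fun a ha => ⟨hone j a ha, Gm j a⟩, fun a ha b hb => ⟨?_, ?_⟩⟩
    · rcases Gc j b with h | h | ⟨c, hc, h⟩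
      · have := Gm j a; omega
      · have h1 := GB j a
        have h2 := (hqK.2 a ha b hb).1
        omega
      · have h1 := GW j a c hc
        have h2 := hM.tri c b a
        rw [hM.comm b a] at h2
        omega
    · have hm := hM.le_m a b
      rcases Gc j a with h | h | ⟨c, hc, h⟩
      · omega
      · rcases Gc j b with h' | h' | ⟨c', hc', h'⟩
        · omega
        · have := (hqK.2 a ha b hb).2
          omega
        · have h1 := (hqK.2 a ha c' (hWW hc')).2
          rw [hqg c' hc'] at h1
          have h2 := hC.fD i j c' hc'
          have h3 := hM.tri a c' b
          omega
      · rcases Gc j b with h' | h' | ⟨c', hc', h'⟩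
        · omega
        · have h1 := (hqK.2 c (hWW hc) b hb).2
          rw [hqg c hc] at h1
          have h2 := hC.fD i j c hc
          have h3 := hM.tri a c b
          have h4 := hM.comm a c
          omega
        · have h1 := ((hC.fK j).2 c hc c' hc').2
          have h3 := hM.tri a c b
          have h4 := hM.comm a c
          have h5 := hM.tri c c' b
          omega
  have hlev' : ∀ j, ∀ a ∈ W', Function.update lev i σ j ≤ G j a := by
    intro j z hz
    by_cases hj : j = i
    · subst hj
      rw [Function.update_self, hGq z hz]
      exact hqσ z hz
    · rw [Function.update_of_ne hj]
      have h0 := hlev j hj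
      have h1 := hqσ z hz
      rcases Gc j z with h | h | ⟨a, ha, h⟩
      · rw [h]; exact hC.flm j
      · omega
      · have := hC.flev j a ha
        omega
  have hD' : ∀ j l, ∀ a ∈ W', G j a ≤ G l a + D j l := by
    intro j l z hz
    rcases Gc l z with h | h | ⟨a, ha, h⟩
    · have := Gm j z; omega
    · have h1 := GB j z
      have h2 := Dt i l j
      have h3 := Dc l j
      omega
    · have h1 := GW j z a ha
      have h2 := hC.fD j l a ha
      omega
  have hE' : ∀ j l, ∀ a ∈ W', E j l ≤ G j a + G l a := by
    intro j l z hz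
    have hm := Em j l
    have hs := hqσ z hz
    rcases Gc j z with h | h | ⟨a, ha, h⟩
    · omega
    · rcases Gc l z with h' | h' | ⟨b, hb, h'⟩
      · omega
      · have := hE j l
        omega
      · have h1 := (hqK.2 b (hWW hb) z hz).1
        rw [hqg b hb] at h1
        have h2 := hC.fD j i b hb
        have h3 := Dc i j
        have h4 := hC.fE j l b hb
        omega
    · rcases Gc l z with h' | h' | ⟨b, hb, h'⟩
      · omega
      · have h1 := (hqK.2 a (hWW ha) z hz).1
        rw [hqg a ha] at h1
        have h2 := hC.fD l i a ha
        have h3 := Dc i l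
        have h4 := hC.fE j l a ha
        omega
      · have h1 := ((hC.fK l).2 a ha b hb).1
        have h2 := hM.tri a z b
        have h3 := hM.comm z b
        have h4 := hC.fE j l a ha
        omega
  refine ⟨W', G, hWW, hGg, ⟨hK, ?_, ?_, hlev', hD', hE', ?_⟩⟩
  · intro j
    by_cases hj : j = i
    · subst hj
      rw [Function.update_self]; exact hσ
    · rw [Function.update_of_ne hj]; exact hC.fone j
  · intro j
    by_cases hj : j = i
    · subst hj
      have := hC.flm j
      rw [Function.update_self]; omega
    · rw [Function.update_of_ne hj]; exact hC.flm j
  · intro j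
    by_cases hj : j = i
    · subst hj
      rw [Function.update_self]
      refine hqL.ext hσ ⟨subset_rfl, hGq, hK j, ?_⟩
      intro a ha
      rw [hGq a ha]; exact hqσ a ha
    · have := hlev' j
      rw [Function.update_of_ne hj] at this ⊢
      exact (hC.fL j).ext (hC.fone j) ⟨hWW, hGg j, hK j, this⟩

theorem UConf.lower {X I : Type} [DecidableEq I] [Fintype I] {d : X → X → ℕ} {m : ℕ}
    (hM : UMS d m) {Γ : Set X} {D E : I → I → ℕ} (t : I → ℕ)
    (D0 : ∀ i, D i i = 0) (Dc : ∀ i j, D i j = D j i) (Dt : ∀ i j k, D i k ≤ D i j + D j k)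
    (D1 : ∀ i j, i ≠ j → 1 ≤ D i j)
    (Em : ∀ i j, E i j ≤ m) (t1 : ∀ i, 1 ≤ t i) (tD : ∀ i j, t j ≤ t i + D i j)
    (tE : ∀ i j l, E j l ≤ 2 * t i + D i j + D i l) (N : ℕ) :
    ∀ (W : Finset X) (g : I → X → ℕ) (lev : I → ℕ), UConf d m Γ D E W g lev →
    (∀ i, t i ≤ lev i) → ∑ i, (lev i - t i) = N →
    ∃ W' g', W ⊆ W' ∧ (∀ j, ∀ a ∈ W, g' j a = g j a) ∧ UConf d m Γ D E W' g' t := by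
  induction N with
  | zero =>
    intro W g lev hC hle hN
    have : lev = t := by
      funext i
      have := (Finset.sum_eq_zero_iff.1 hN) i (Finset.mem_univ i)
      have := hle i
      omega
    subst this
    exact ⟨W, g, subset_rfl, fun _ _ _ => rfl, hC⟩
  | succ N ih =>
    intro W g lev hC hle hN
    have hne : (Finset.univ.filter fun i => t i < lev i).Nonempty := by
      by_contra hcon
      rw [Finset.not_nonempty_iff_eq_empty, Finset.filter_eq_empty_iff] at hcon
      have : ∑ i, (lev i - t i) = 0 := Finset.sum_eq_zero fun i _ => by
        have := hcon (Finset.mem_univ i)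
        omega
      omega
    obtain ⟨i, hi, hmax⟩ := Finset.exists_max_image _ lev hne
    have hi' : t i < lev i := (Finset.mem_filter.1 hi).2
    have hti := t1 i
    obtain ⟨σ, hσ⟩ : ∃ σ, lev i = σ + 1 := ⟨lev i - 1, by omega⟩
    obtain ⟨W₁, g₁, hW₁, hg₁, hC₁⟩ := hC.step hM D0 Dc Dt Em i σ hσ (by omega)
      (by
        intro j hj
        have h1 := D1 i j (Ne.symm hj)
        by_cases hjt : t j < lev j
        · have := hmax j (Finset.mem_filter.2 ⟨Finset.mem_univ j, hjt⟩)
          omega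
        · have := tD i j
          omega)
      (by
        intro j l
        have := tE i j l
        omega)
    obtain ⟨W₂, g₂, hW₂, hg₂, hC₂⟩ := ih W₁ g₁ _ hC₁
      (by
        intro j
        by_cases hj : j = i
        · subst hj; rw [Function.update_self]; omega
        · rw [Function.update_of_ne hj]; exact hle j)
      (by
        rw [← Finset.add_sum_erase _ _ (Finset.mem_univ i)] at hN ⊢
        have : ∑ x ∈ Finset.univ.erase i, (Function.update lev i σ x - t x)
            = ∑ x ∈ Finset.univ.erase i, (lev x - t x) := by
          refine Finset.sum_congr rfl fun x hx => ?_
          rw [Function.update_of_ne (Finset.ne_of_mem_erase hx)]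
        rw [this, Function.update_self]
        omega)
    exact ⟨W₂, g₂, hW₁.trans hW₂, fun j a ha => by rw [hg₂ j a (hW₁ ha), hg₁ j a ha], hC₂⟩

/-- The type of `u j` over `u 0, …, u (n-1)`, padded with `m`. -/
def uty {X : Type} (d : X → X → ℕ) (m : ℕ) (u : ℕ → X) (n j : ℕ) : ℕ → ℕ :=
  fun i => if i < n then d (u j) (u i) else m

/-- The sup distance. -/
noncomputable def uD (σ τ : ℕ → ℕ) : ℕ := sInf {N | ∀ i, σ i ≤ τ i + N ∧ τ i ≤ σ i + N}

/-- The largest possible distance (up to `m`). -/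
noncomputable def uE (m : ℕ) (σ τ : ℕ → ℕ) : ℕ := min m (⨅ i, (σ i + τ i))

/-- The rank. -/
noncomputable def ur (σ : ℕ → ℕ) : ℕ := ⨅ i, σ i

theorem uty_le {X : Type} {d : X → X → ℕ} {m : ℕ} (hM : UMS d m) (u : ℕ → X) (n j i : ℕ) :
    uty d m u n j i ≤ m := by
  unfold uty
  split_ifs
  · exact hM.le_m _ _
  · exact le_rfl

theorem uD_le {σ τ : ℕ → ℕ} {N : ℕ} (h : ∀ i, σ i ≤ τ i + N ∧ τ i ≤ σ i + N) : uD σ τ ≤ N :=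
  Nat.sInf_le h

theorem uD_spec {σ τ : ℕ → ℕ} {m : ℕ} (hσ : ∀ i, σ i ≤ m) (hτ : ∀ i, τ i ≤ m) (i : ℕ) :
    σ i ≤ τ i + uD σ τ ∧ τ i ≤ σ i + uD σ τ := by
  have hne : {N | ∀ i, σ i ≤ τ i + N ∧ τ i ≤ σ i + N}.Nonempty :=
    ⟨m, fun i => ⟨by have := hσ i; omega, by have := hτ i; omega⟩⟩
  exact Nat.sInf_mem hne i

theorem uE_le_m (m : ℕ) (σ τ : ℕ → ℕ) : uE m σ τ ≤ m := min_le_left _ _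

theorem uE_le (m : ℕ) (σ τ : ℕ → ℕ) (i : ℕ) : uE m σ τ ≤ σ i + τ i :=
  (min_le_right _ _).trans (ciInf_le' (fun i => σ i + τ i) i)

theorem le_uE {m N : ℕ} {σ τ : ℕ → ℕ} (hm : N ≤ m) (h : ∀ i, N ≤ σ i + τ i) : N ≤ uE m σ τ :=
  le_min hm (le_ciInf h)

theorem ur_le (σ : ℕ → ℕ) (i : ℕ) : ur σ ≤ σ i := ciInf_le' σ i

theorem le_ur {N : ℕ} {σ : ℕ → ℕ} (h : ∀ i, N ≤ σ i) : N ≤ ur σ := le_ciInf h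

theorem ur_mem (σ : ℕ → ℕ) : ∃ i, σ i = ur σ := ciInf_mem σ

/-- State of the construction at stage `n`. -/
structure UState {X : Type} (d : X → X → ℕ) (m : ℕ) (Γ : Set X) (u : ℕ → X) (n : ℕ)
    (v : ℕ → X) (W : Finset X) (h : {j : ℕ // n ≤ j} → X → ℕ) : Prop where
  mem : ∀ i < n, v i ∈ Γ ∧ v i ∈ W
  iso : ∀ i < n, ∀ j < n, d (v i) (v j) = d (u i) (u j)
  val : ∀ j, ∀ i < n, h j (v i) = d (u j) (u i)
  conf : UConf d m Γ (fun j l : {j : ℕ // n ≤ j} => uD (uty d m u n j) (uty d m u n l))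
    (fun j l => uE m (uty d m u n j) (uty d m u n l)) W h (fun j => ur (uty d m u n j))

theorem uty_restrict {X : Type} {d : X → X → ℕ} {m : ℕ} (hM : UMS d m) (u : ℕ → X)
    (n j i : ℕ) : uty d m u (n + 1) j i ≤ uty d m u n j i := by
  have := hM.le_m (u j) (u i)
  unfold uty
  split_ifs <;> omega

theorem uty_finite {X : Type} {d : X → X → ℕ} {m : ℕ} (hM : UMS d m) (u : ℕ → X)
    (n : ℕ) : Set.Finite {σ | ∃ j, n ≤ j ∧ uty d m u (n + 1) j = σ} := by
  let F : (Fin (n + 1) → Fin (m + 1)) → (ℕ → ℕ) :=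
    fun f i => if hi : i < n + 1 then (f ⟨i, hi⟩ : ℕ) else m
  refine (Set.finite_range F).subset ?_
  rintro σ ⟨j, _, rfl⟩
  refine ⟨fun i => ⟨d (u j) (u i), Nat.lt_succ_of_le (hM.le_m _ _)⟩, ?_⟩
  funext i
  by_cases hi : i < n + 1
  · simp only [F, uty, dif_pos hi, if_pos hi]
  · simp only [F, uty, dif_neg hi, if_neg hi]

theorem UState.next {X : Type} {d : X → X → ℕ} {m : ℕ} (hm : 1 ≤ m) (hM : UMS d m) {Γ : Set X}
    {u : ℕ → X} (hu : Function.Injective u) {n : ℕ} {v : ℕ → X} {W : Finset X}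
    {h : {j : ℕ // n ≤ j} → X → ℕ} (hS : UState d m Γ u n v W h) :
    ∃ v' W' h', UState d m Γ u (n + 1) v' W' h' ∧ ∀ i < n, v' i = v i := by
  classical
  have hfin := uty_finite hM u n
  let J := {σ : ℕ → ℕ // ∃ j, n ≤ j ∧ uty d m u (n + 1) j = σ}
  haveI : Finite J := hfin
  haveI : Fintype J := Fintype.ofFinite J
  have hrep : ∀ σ : J, ∃ j : {j : ℕ // n ≤ j}, uty d m u (n + 1) j = σ.1 := by
    rintro ⟨σ, j, hj, e⟩
    exact ⟨⟨j, hj⟩, e⟩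
  choose rep hrep using hrep
  have hJm : ∀ (σ : J) i, σ.1 i ≤ m := by
    intro σ i
    rw [← hrep σ]; exact uty_le hM u _ _ i
  have hspec := fun (σ τ : J) => uD_spec (hJm σ) (hJm τ)
  have hC0 : UConf d m Γ (fun σ τ : J => uD σ.1 τ.1) (fun σ τ : J => uE m σ.1 τ.1) W
      (fun σ => h (rep σ)) (fun σ => ur (uty d m u n (rep σ))) := by
    refine ⟨fun σ => hS.conf.fK _, fun σ => hS.conf.fone _, fun σ => hS.conf.flm _,
      fun σ => hS.conf.flev _, ?_, ?_, fun σ => hS.conf.fL _⟩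
    · intro σ τ a ha
      refine (hS.conf.fD (rep σ) (rep τ) a ha).trans (Nat.add_le_add_left ?_ _)
      refine uD_le fun i => ?_
      have := hspec σ τ i
      rw [← hrep σ, ← hrep τ] at this ⊢
      unfold uty at this ⊢
      by_cases hi : i < n
      · have hi' : i < n + 1 := by omega
        simpa [hi, hi'] using this
      · simp [hi]
    · intro σ τ a ha
      refine le_trans ?_ (hS.conf.fE (rep σ) (rep τ) a ha)
      refine le_uE (uE_le_m _ _ _) fun i => ?_
      refine (uE_le m σ.1 τ.1 i).trans ?_
      rw [← hrep σ, ← hrep τ]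
      exact Nat.add_le_add (uty_restrict hM u n _ i) (uty_restrict hM u n _ i)
  have hur : ∀ σ : J, ur σ.1 ≤ ur (uty d m u n (rep σ)) := by
    intro σ
    refine le_ur fun i => (ur_le _ i).trans ?_
    rw [← hrep σ]
    exact uty_restrict hM u n _ i
  obtain ⟨W', g', hWW, hg', hC⟩ := UConf.lower hM (Γ := Γ) (fun σ : J => max 1 (ur σ.1))
    (D := fun σ τ : J => uD σ.1 τ.1) (E := fun σ τ : J => uE m σ.1 τ.1)
    (fun σ => Nat.le_zero.1 (uD_le fun i => by omega))
    (fun σ τ => by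
      apply le_antisymm
      · exact uD_le fun i => (hspec τ σ i).symm
      · exact uD_le fun i => (hspec σ τ i).symm)
    (fun σ τ ρ => uD_le fun i => by
      have h1 := hspec σ τ i
      have h2 := hspec τ ρ i
      omega)
    (fun σ τ hne => by
      by_contra hcon
      apply hne
      apply Subtype.ext
      funext i
      have h1 := hspec σ τ i
      omega)
    (fun σ τ => uE_le_m _ _ _)
    (fun σ => le_max_left _ _)
    (fun σ τ => by
      obtain ⟨i, hi⟩ := ur_mem σ.1
      have h1 := hspec σ τ i
      have h2 := ur_le τ.1 i
      omega)
    (fun σ τ ρ => by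
      obtain ⟨i, hi⟩ := ur_mem σ.1
      have h1 := hspec σ τ i
      have h2 := hspec σ ρ i
      have h3 := uE_le m τ.1 ρ.1 i
      omega)
    _ W _ _ hC0
    (fun σ => max_le (hC0.fone σ) (hur σ)) rfl
  let σ₀ : J := ⟨uty d m u (n + 1) n, n, le_rfl, rfl⟩
  obtain ⟨p, hpΓ, hp⟩ := (hC.fL σ₀).exists _ (hC.fK σ₀) (hC.flev σ₀)
  have hpW : p ∉ W' := by
    intro hpW
    have h1 := hp p hpW
    have h2 := ((hC.fK σ₀).1 p hpW).1
    rw [hM.self] at h1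
    omega
  let ty : {j : ℕ // n + 1 ≤ j} → J := fun j => ⟨uty d m u (n + 1) j, j, by have := j.2; omega, rfl⟩
  let h' : {j : ℕ // n + 1 ≤ j} → X → ℕ :=
    fun j x => if x = p then d (u j) (u n) else g' (ty j) x
  have hh'p : ∀ j, h' j p = d (u j) (u n) := fun j => if_pos rfl
  have hh' : ∀ j, ∀ a ∈ W', h' j a = g' (ty j) a := by
    intro j a ha
    have hne : a ≠ p := fun e => hpW (e ▸ ha)
    exact if_neg hne
  have hvW : ∀ (σ : J), ∀ i < n, g' σ (v i) = σ.1 i := by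
    intro σ i hi
    rw [hg' σ (v i) (hS.mem i hi).2, hS.val (rep σ) i hi, ← hrep σ]
    simp [uty, show i < n + 1 by omega]
  have hune : ∀ j : {j : ℕ // n + 1 ≤ j}, ∀ i < n + 1, 1 ≤ d (u j) (u i) := by
    intro j i hi
    by_contra hcon
    have := hu (hM.eq (u j) (u i) (by omega))
    have := j.2
    omega
  have hur1 : ∀ j : {j : ℕ // n + 1 ≤ j}, 1 ≤ ur (uty d m u (n + 1) j) := by
    intro j
    refine le_ur fun i => ?_
    unfold uty
    split_ifs with hi
    · exact hune j i hi
    · exact hm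
  have hmax : ∀ j : {j : ℕ // n + 1 ≤ j},
      max 1 (ur (ty j).1) = ur (uty d m u (n + 1) j) := fun j => max_eq_right (hur1 j)
  have hutyn : ∀ j : ℕ, uty d m u (n + 1) j n = d (u j) (u n) := by
    intro j; simp [uty]
  have hD0 : ∀ j : {j : ℕ // n + 1 ≤ j}, uD (ty j).1 σ₀.1 ≤ d (u j) (u n) := by
    intro j
    refine uD_le fun i => ?_
    change uty d m u (n + 1) j i ≤ uty d m u (n + 1) n i + _ ∧
      uty d m u (n + 1) n i ≤ uty d m u (n + 1) j i + _
    unfold uty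
    have h1 := hM.tri (u j) (u n) (u i)
    have h2 := hM.tri (u n) (u j) (u i)
    have h3 := hM.comm (u j) (u n)
    split_ifs <;> omega
  have hE0 : ∀ j : {j : ℕ // n + 1 ≤ j}, d (u j) (u n) ≤ uE m (ty j).1 σ₀.1 := by
    intro j
    refine le_uE (hM.le_m _ _) fun i => ?_
    change _ ≤ uty d m u (n + 1) j i + uty d m u (n + 1) n i
    unfold uty
    have h1 := hM.tri (u j) (u i) (u n)
    have h2 := hM.le_m (u j) (u n)
    have h3 := hM.comm (u i) (u n)
    split_ifs <;> omega
  have hD1 : ∀ j : {j : ℕ // n + 1 ≤ j}, ∀ a ∈ W', g' (ty j) a ≤ d a p + d (u j) (u n) ∧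
      d a p ≤ g' (ty j) a + d (u j) (u n) ∧ d (u j) (u n) ≤ g' (ty j) a + d a p := by
    intro j a ha
    have h1 := hC.fD (ty j) σ₀ a ha
    have h2 := hC.fD σ₀ (ty j) a ha
    have h3 := hC.fE (ty j) σ₀ a ha
    have h4 := hp a ha
    have h5 := hM.comm a p
    have h6 := hD0 j
    have h7 := hE0 j
    have h8 : uD σ₀.1 (ty j).1 ≤ uD (ty j).1 σ₀.1 := uD_le fun i => (hspec (ty j) σ₀ i).symm
    omega
  have hK' : ∀ j : {j : ℕ // n + 1 ≤ j}, UK d m (insert p W') (h' j) := by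
    intro j
    refine ⟨?_, ?_⟩
    · intro a ha₀
      rcases Finset.mem_insert.1 ha₀ with rfl | ha
      · rw [hh'p]; exact ⟨hune j n (by omega), hM.le_m _ _⟩
      · rw [hh' j a ha]; exact (hC.fK (ty j)).1 a ha
    · intro a ha₀ b hb₀
      rcases Finset.mem_insert.1 ha₀ with rfl | ha
      · rcases Finset.mem_insert.1 hb₀ with rfl | hb
        · rw [hM.self]; omega
        · rw [hh'p, hh' j b hb]
          have := hD1 j b hb
          have := hM.comm a b
          omega
      · rcases Finset.mem_insert.1 hb₀ with rfl | hb
        · rw [hh'p, hh' j a ha]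
          have := hD1 j a ha
          omega
        · rw [hh' j a ha, hh' j b hb]
          exact (hC.fK (ty j)).2 a ha b hb
  have hlev' : ∀ j : {j : ℕ // n + 1 ≤ j}, ∀ a ∈ insert p W', ur (uty d m u (n + 1) j) ≤ h' j a := by
    intro j a ha
    rcases Finset.mem_insert.1 ha with rfl | ha
    · rw [hh'p, ← hutyn]; exact ur_le _ n
    · rw [hh' j a ha, ← hmax]; exact hC.flev (ty j) a ha
  have hvp : ∀ i < n, d p (v i) = d (u n) (u i) := by
    intro i hi
    rw [hp (v i) (hWW (hS.mem i hi).2), hvW σ₀ i hi]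
    simp [σ₀, uty, show i < n + 1 by omega]
  refine ⟨Function.update v n p, insert p W', h', ⟨?_, ?_, ?_, ?_⟩, ?_⟩
  · intro i hi
    by_cases hin : i = n
    · subst hin
      rw [Function.update_self]
      exact ⟨hpΓ, Finset.mem_insert_self _ _⟩
    · rw [Function.update_of_ne hin]
      have := hS.mem i (by omega)
      exact ⟨this.1, Finset.mem_insert_of_mem (hWW this.2)⟩
  · intro i hi j hj
    by_cases hin : i = n
    · by_cases hjn : j = n
      · subst hin; subst hjn
        rw [hM.self, hM.self]
      · subst hin
        rw [Function.update_self, Function.update_of_ne hjn, hvp j (by omega)]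
    · by_cases hjn : j = n
      · subst hjn
        rw [Function.update_self, Function.update_of_ne hin, hM.comm, hvp i (by omega), hM.comm]
      · rw [Function.update_of_ne hin, Function.update_of_ne hjn]
        exact hS.iso i (by omega) j (by omega)
  · intro j i hi
    by_cases hin : i = n
    · subst hin
      rw [Function.update_self, hh'p]
    · have hi' : i < n := by omega
      rw [Function.update_of_ne hin, hh' j _ (hWW (hS.mem i hi').2), hvW _ i hi']
      simp [ty, uty, hi]
  · refine ⟨hK', hur1, ?_, hlev', ?_, ?_, ?_⟩
    · intro j
      exact (ur_le _ n).trans (uty_le hM u _ _ n)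
    · intro j l a ha
      rcases Finset.mem_insert.1 ha with rfl | ha
      · rw [hh'p, hh'p, ← hutyn, ← hutyn]
        exact (hspec (ty j) (ty l) n).1
      · rw [hh' j a ha, hh' l a ha]
        exact hC.fD (ty j) (ty l) a ha
    · intro j l a ha
      rcases Finset.mem_insert.1 ha with rfl | ha
      · rw [hh'p, hh'p, ← hutyn, ← hutyn]
        exact uE_le m _ _ n
      · rw [hh' j a ha, hh' l a ha]
        exact hC.fE (ty j) (ty l) a ha
    · intro j
      have hL := hC.fL (ty j)
      rw [hmax] at hL
      exact hL.ext (hur1 j) ⟨Finset.subset_insert _ _, hh' j, hK' j, hlev' j⟩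
  · intro i hi
    rw [Function.update_of_ne (by omega)]

theorem UState.zero {X : Type} {d : X → X → ℕ} {m : ℕ} (hm : 1 ≤ m) {Γ : Set X}
    (u : ℕ → X) (W : Finset X) (g : X → ℕ) (hK : UK d m W g) (hg : ∀ a ∈ W, m ≤ g a)
    (hL : ULarge d m Γ m W g) : UState d m Γ u 0 u W (fun _ => g) := by
  have h0 : ∀ j, uty d m u 0 j = fun _ => m := fun j => by funext i; simp [uty]
  have hr : ur (fun _ : ℕ => m) = m := by simp [ur]
  refine ⟨by simp, by simp, by simp, ⟨fun _ => hK, ?_, ?_, ?_, ?_, ?_, ?_⟩⟩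
  · intro j; simp only [h0, hr]; exact hm
  · intro j; simp only [h0, hr]; exact le_rfl
  · intro j; simp only [h0, hr]; exact hg
  · intro j l a ha; omega
  · intro j l a ha
    have := hg a ha
    exact (uE_le_m _ _ _).trans (by omega)
  · intro j; simp only [h0, hr]; exact hL

theorem ucopy {X : Type} {d : X → X → ℕ} {m : ℕ} (hm : 1 ≤ m) (hM : UMS d m) {Γ : Set X}
    (u : ℕ → X) (hu : Function.Injective u) (W : Finset X) (g : X → ℕ) (hK : UK d m W g)
    (hg : ∀ a ∈ W, m ≤ g a) (hL : ULarge d m Γ m W g) :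
    ∃ v : ℕ → X, (∀ i, v i ∈ Γ) ∧ ∀ i j, d (v i) (v j) = d (u i) (u j) := by
  classical
  let P : ℕ → (ℕ → X) → Prop := fun n v => ∃ W h, UState d m Γ u n v W h
  have hnext : ∀ n (v : {v // P n v}), ∃ v' : {v // P (n + 1) v}, ∀ i < n, v'.1 i = v.1 i := by
    rintro n ⟨v, W, h, hS⟩
    obtain ⟨v', W', h', hS', e⟩ := hS.next hm hM hu
    exact ⟨⟨v', W', h', hS'⟩, e⟩
  choose nx hnx using hnext
  let s : ∀ n, {v // P n v} := fun n =>
    Nat.rec (motive := fun n => {v // P n v}) ⟨u, W, _, UState.zero hm u W g hK hg hL⟩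
      (fun n v => nx n v) n
  have hs : ∀ n, ∀ i < n, (s (n + 1)).1 i = (s n).1 i := fun n => hnx n (s n)
  have hs' : ∀ n k, ∀ i < n, (s (n + k)).1 i = (s n).1 i := by
    intro n k
    induction k with
    | zero => intro i hi; rfl
    | succ k ih =>
      intro i hi
      rw [← ih i hi]
      exact hs (n + k) i (by omega)
  have hsv : ∀ n, ∀ i < n, (s (i + 1)).1 i = (s n).1 i := by
    intro n i hi
    obtain ⟨k, rfl⟩ : ∃ k, n = (i + 1) + k := ⟨n - (i + 1), by omega⟩
    exact (hs' (i + 1) k i (by omega)).symm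
  refine ⟨fun i => (s (i + 1)).1 i, ?_, ?_⟩
  · intro i
    obtain ⟨W, h, hS⟩ := (s (i + 1)).2
    exact (hS.mem i (by omega)).1
  · intro i j
    obtain ⟨W, h, hS⟩ := (s (i + j + 1)).2
    have := hS.iso i (by omega) j (by omega)
    rw [← hsv (i + j + 1) i (by omega), ← hsv (i + j + 1) j (by omega)] at this
    exact this

theorem UMS.infinite {X : Type} {d : X → X → ℕ} {m : ℕ} (hm : 1 ≤ m) (hM : UMS d m) :
    Infinite X := by
  by_contra hcon
  rw [not_infinite_iff_finite] at hcon
  haveI := Fintype.ofFinite X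
  obtain ⟨x, hx⟩ := hM.ep Finset.univ (fun _ => m)
    ⟨fun _ _ => ⟨hm, le_rfl⟩, fun a _ b _ => ⟨Nat.le_add_right m _, (hM.le_m a b).trans (Nat.le_add_right m m)⟩⟩
  have := hx x (Finset.mem_univ x)
  rw [hM.self] at this
  omega

/-- The one-point extension of a finite subspace given by a Katetov function. -/
def uoptDist {X : Type} (d : X → X → ℕ) (W : Finset X) (g : X → ℕ) :
    Option {x // x ∈ W} → Option {x // x ∈ W} → ℕ
  | none, none => 0
  | none, some a => g a
  | some a, none => g a
  | some a, some b => d a b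

/-- The one-point extension as a metric space. -/
noncomputable abbrev uoptMetric {X : Type} (d : X → X → ℕ) (m : ℕ) (W : Finset X) (g : X → ℕ)
    (hK : UK d m W g) (h0 : ∀ x, d x x = 0) (hc : ∀ x y, d x y = d y x)
    (ht : ∀ x y z, d x z ≤ d x y + d y z) (he : ∀ x y, d x y = 0 → x = y) :
    MetricSpace (Option {x // x ∈ W}) where
  dist a b := (uoptDist d W g a b : ℝ)
  dist_self a := by cases a <;> simp [uoptDist, h0]
  dist_comm a b := by
    cases a <;> cases b <;> simp [uoptDist]
    exact hc _ _
  dist_triangle a b c := by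
    norm_cast
    rcases a with _ | ⟨a, ha⟩ <;> rcases b with _ | ⟨b, hb⟩ <;> rcases c with _ | ⟨c, hc'⟩ <;>
      simp only [uoptDist]
    · omega
    · omega
    · omega
    · have := (hK.2 c hc' b hb).1
      have := hc b c
      omega
    · omega
    · exact (hK.2 a ha c hc').2
    · have := (hK.2 a ha b hb).1
      omega
    · exact ht a b c
  eq_of_dist_eq_zero := by
    intro a b h
    have h' : uoptDist d W g a b = 0 := by exact_mod_cast h
    rcases a with _ | ⟨a, ha⟩ <;> rcases b with _ | ⟨b, hb⟩ <;> simp only [uoptDist] at h'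
    · rfl
    · have := (hK.1 b hb).1; omega
    · have := (hK.1 a ha).1; omega
    · have := he a b h'
      subst this
      rfl

/-- The space `U_m` (the countable ultrahomogeneous metric space with distances in
`{1,…,m}`, universal for countable metric spaces with distances in `{1,…,m}`) is
indivisible: for every finite partition, one piece contains an isometric copy
of the whole space. -/
theorem Um_indivisible (m : ℕ) (hm : 1 ≤ m)
    (X : Type) [MetricSpace X] [Countable X]
    (hdist : ∀ x y : X, x ≠ y → ∃ k : ℕ, 1 ≤ k ∧ k ≤ m ∧ dist x y = k)
    (hultra : ∀ (F : Finset X) (φ : X → X),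
      (∀ x ∈ F, ∀ y ∈ F, dist (φ x) (φ y) = dist x y) →
      ∃ ψ : X ≃ᵢ X, ∀ x ∈ F, ψ x = φ x)
    (huniv : ∀ (Y : Type) [MetricSpace Y] [Countable Y],
      (∀ x y : Y, x ≠ y → ∃ k : ℕ, 1 ≤ k ∧ k ≤ m ∧ dist x y = k) →
      ∃ e : Y → X, Isometry e) :
    ∀ (k : ℕ) (c : X → Fin k), ∃ (i : Fin k) (e : X → X),
      Isometry e ∧ ∀ x, c (e x) = i := by
  intro k c
  classical
  choose d hd using fun x y : X => (show ∃ n : ℕ, dist x y = n ∧ n ≤ m by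
    by_cases h : x = y
    · exact ⟨0, by simp [h], by omega⟩
    · obtain ⟨n, _, h2, h3⟩ := hdist x y h
      exact ⟨n, h3, h2⟩)
  have h0 : ∀ x, d x x = 0 := fun x => by
    have := (hd x x).1
    rw [dist_self] at this
    exact_mod_cast this.symm
  have hc : ∀ x y, d x y = d y x := fun x y => by
    have h1 := (hd x y).1
    rw [dist_comm, (hd y x).1] at h1
    exact_mod_cast h1.symm
  have ht : ∀ x y z, d x z ≤ d x y + d y z := fun x y z => by
    have h1 := dist_triangle x y z
    rw [(hd x y).1, (hd y z).1, (hd x z).1] at h1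
    exact_mod_cast h1
  have he : ∀ x y, d x y = 0 → x = y := fun x y h => by
    have h1 := (hd x y).1
    rw [h] at h1
    exact dist_eq_zero.1 (by simpa using h1)
  have hM : UMS d m := by
    refine ⟨h0, hc, ht, fun x y => (hd x y).2, he, ?_⟩
    intro W g hK
    letI := uoptMetric d m W g hK h0 hc ht he
    have hYd : ∀ a b : Option {x // x ∈ W}, dist a b = (uoptDist d W g a b : ℝ) :=
      fun _ _ => rfl
    obtain ⟨e, hE⟩ := huniv (Option {x // x ∈ W}) (by
      intro a b hab
      refine ⟨uoptDist d W g a b, ?_, ?_, hYd a b⟩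
      · by_contra hcon
        apply hab
        apply dist_eq_zero.1
        rw [hYd]
        have : uoptDist d W g a b = 0 := by omega
        rw [this]; simp
      · rcases a with _ | ⟨a, ha⟩ <;> rcases b with _ | ⟨b, hb⟩ <;> simp only [uoptDist]
        · omega
        · exact (hK.1 b hb).2
        · exact (hK.1 a ha).2
        · exact (hd a b).2)
    let φ : X → X := fun x => if h : ∃ a : {x // x ∈ W}, e (some a) = x then (h.choose : X) else x
    have hφ : ∀ a : {x // x ∈ W}, φ (e (some a)) = a := by
      intro a
      have hex : ∃ b : {x // x ∈ W}, e (some b) = e (some a) := ⟨a, rfl⟩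
      have h1 : φ (e (some a)) = (hex.choose : X) := dif_pos hex
      rw [h1]
      have h2 := hE.injective hex.choose_spec
      rw [Option.some_inj.1 h2]
    obtain ⟨ψ, hψ⟩ := hultra (Finset.univ.image fun a : {x // x ∈ W} => e (some a)) φ (by
      intro x hx y hy
      obtain ⟨a, _, rfl⟩ := Finset.mem_image.1 hx
      obtain ⟨b, _, rfl⟩ := Finset.mem_image.1 hy
      rw [hφ, hφ, hE.dist_eq, hYd, (hd _ _).1]
      rfl)
    refine ⟨ψ (e none), fun a ha => ?_⟩
    have h1 := hψ (e (some ⟨a, ha⟩)) (Finset.mem_image_of_mem _ (Finset.mem_univ _))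
    rw [hφ] at h1
    have h2 : dist (ψ (e none)) (ψ (e (some ⟨a, ha⟩))) = (g a : ℝ) := by
      rw [ψ.dist_eq, hE.dist_eq, hYd]
      rfl
    rw [h1, (hd _ _).1] at h2
    exact_mod_cast h2
  haveI : Infinite X := hM.infinite hm
  obtain ⟨f⟩ : Nonempty (ℕ ≃ X) := by
    haveI := Encodable.ofCountable X
    haveI := Denumerable.ofEncodableOfInfinite X
    exact ⟨(Denumerable.eqv X).symm⟩
  have hK0 : UK d m ∅ (fun _ => 0) := ⟨by simp, by simp⟩
  have hL0 : ULarge d m {x | c x ∈ (Finset.univ : Finset (Fin k))} m ∅ (fun _ => 0) := by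
    have := ULarge.univ hM m hK0
    simpa using this
  obtain ⟨i, W, g, hext, hL⟩ := ULarge.color c m Finset.univ ∅ _ hL0 hK0 (by simp)
  obtain ⟨v, hv, hvd⟩ := ucopy hm hM f f.injective W g hext.2.2.1 hext.2.2.2 hL
  refine ⟨i, fun x => v (f.symm x), ?_, fun x => hv _⟩
  refine Isometry.of_dist_eq fun x y => ?_
  rw [(hd _ _).1, hvd, (hd x y).1]
  simp
end

section
/- If m ≥ 1 and the discretized Urysohn sphere S_m = (U_m, d/m) is indivisible, then the Urysohn sphere S is 1/m-indivisible: for every finite partition of S there is a piece Γ such that the 1/m-neighborhood (Γ)_{1/m} contains an isometric copy of S. -/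
lemma us_sInf_le_of (A B : Set ℝ) (δ : ℝ) (hA : A.Nonempty) (hB : ∀ x ∈ B, 0 ≤ x)
    (h : ∀ x ∈ A, ∃ y ∈ B, y ≤ x + δ) : sInf B ≤ sInf A + δ := by
  have : sInf B - δ ≤ sInf A := by
    apply le_csInf hA
    intro x hx
    obtain ⟨y, hy, hyx⟩ := h x hx
    have := csInf_le ⟨0, fun z hz => hB z hz⟩ hy
    linarith
  linarith

/-- Along a tree of nodes (`le`), with attached base points `α`, a function which realises the
distance of two comparable nodes and is compatible with all the gluing constraints. -/
lemma us_core {T U P : Type} [MetricSpace P] (le : T → T → Prop) (p : T → P) (α : T → U)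
    (dU : U → U → ℝ) (ε : ℝ) (hε : 0 ≤ ε)
    (hU0 : ∀ a b, 0 ≤ dU a b) (hUs : ∀ a, dU a a = 0)
    (hUt : ∀ a b c, dU a c ≤ dU a b + dU b c)
    (hrefl : ∀ t, le t t) (htrans : ∀ r s t, le r s → le s t → le r t)
    (hlin : ∀ r s t, le r t → le s t → le r s ∨ le s r)
    (hdiam : ∀ x y : P, dist x y ≤ 1)
    (hI : ∀ r z t, le r z → le r t →
      dU (α z) (α t) ≤ 2 * ε + dist (p z) (p r) + dist (p r) (p t))
    (hII : ∀ r q z w, (le r q ∨ le q r) → le r z → le q w →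
      dist (p r) (p q) ≤ dist (p r) (p z) + 2 * ε + dU (α z) (α w) + dist (p w) (p q))
    (s t : T) (hst : le s t) :
    ∃ f : U ⊕ T → ℝ, (∀ w, 0 ≤ f w ∧ f w ≤ 1) ∧
      (∀ u v, le u v → |f (Sum.inr u) - f (Sum.inr v)| ≤ dist (p u) (p v)) ∧
      (∀ u, |f (Sum.inr u) - f (Sum.inl (α u))| ≤ ε) ∧
      f (Sum.inr s) = 0 ∧ dist (p s) (p t) ≤ f (Sum.inr t) := by
  let RU : U → Set ℝ := fun c => {v | v = 1 ∨ ∃ r z, le r s ∧ le r z ∧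
    v = dist (p s) (p r) + dist (p r) (p z) + ε + dU (α z) c}
  let RT : T → Set ℝ := fun u => {v | v = 1 ∨
    (∃ r, le r s ∧ le r u ∧ v = dist (p s) (p r) + dist (p r) (p u)) ∨
    ∃ r z q w, le r s ∧ le r z ∧ le q u ∧ le q w ∧
      v = dist (p s) (p r) + dist (p r) (p z) + ε + dU (α z) (α w) + ε
        + dist (p w) (p q) + dist (p q) (p u)}
  have RU0 : ∀ c, ∀ x ∈ RU c, 0 ≤ x := by
    rintro c x (rfl | ⟨r, z, -, -, rfl⟩)
    · norm_num
    · have := hU0 (α z) c; positivity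
  have RT0 : ∀ c, ∀ x ∈ RT c, 0 ≤ x := by
    rintro c x (rfl | ⟨r, -, -, rfl⟩ | ⟨r, z, q, w, -, -, -, -, rfl⟩)
    · norm_num
    · positivity
    · have := hU0 (α z) (α w); positivity
  have RU1 : ∀ c, (1 : ℝ) ∈ RU c := fun c => Or.inl rfl
  have RT1 : ∀ c, (1 : ℝ) ∈ RT c := fun c => Or.inl rfl
  refine ⟨Sum.elim (fun c => sInf (RU c)) (fun u => sInf (RT u)), ?_, ?_, ?_, ?_, ?_⟩
  · rintro (c | u)
    · exact ⟨le_csInf ⟨1, RU1 c⟩ (RU0 c), csInf_le ⟨0, RU0 c⟩ (RU1 c)⟩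
    · exact ⟨le_csInf ⟨1, RT1 u⟩ (RT0 u), csInf_le ⟨0, RT0 u⟩ (RT1 u)⟩
  · intro u v huv
    simp only [Sum.elim_inr]
    rw [abs_sub_le_iff]
    constructor
    · have := us_sInf_le_of (RT v) (RT u) (dist (p u) (p v)) ⟨1, RT1 v⟩ (RT0 u) ?_
      · linarith
      rintro x (rfl | ⟨r, hr, hrv, rfl⟩ | ⟨r, z, q, w, hr, hrz, hq, hqw, rfl⟩)
      · exact ⟨1, RT1 u, by linarith [dist_nonneg (x := p u) (y := p v)]⟩
      · rcases hlin r u v hrv huv with h | h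
        · refine ⟨_, Or.inr (Or.inl ⟨r, hr, h, rfl⟩), ?_⟩
          linarith [dist_triangle (p r) (p v) (p u), dist_comm (p u) (p v)]
        · refine ⟨_, Or.inr (Or.inl ⟨u, htrans _ _ _ h hr, hrefl u, rfl⟩), ?_⟩
          linarith [dist_triangle (p r) (p v) (p u), dist_comm (p u) (p v), dist_self (p u),
            dist_triangle (p s) (p r) (p u)]
      · rcases hlin q u v hq huv with h | h
        · refine ⟨_, Or.inr (Or.inr ⟨r, z, q, w, hr, hrz, h, hqw, rfl⟩), ?_⟩
          linarith [dist_triangle (p q) (p v) (p u), dist_comm (p u) (p v)]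
        · refine ⟨_, Or.inr (Or.inr ⟨r, z, u, w, hr, hrz, hrefl u,
            htrans _ _ _ h hqw, rfl⟩), ?_⟩
          linarith [dist_triangle (p q) (p v) (p u), dist_comm (p u) (p v), dist_self (p u),
            dist_triangle (p w) (p q) (p u)]
    · have := us_sInf_le_of (RT u) (RT v) (dist (p u) (p v)) ⟨1, RT1 u⟩ (RT0 v) ?_
      · linarith
      rintro x (rfl | ⟨r, hr, hru, rfl⟩ | ⟨r, z, q, w, hr, hrz, hq, hqw, rfl⟩)
      · exact ⟨1, RT1 v, by linarith [dist_nonneg (x := p u) (y := p v)]⟩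
      · refine ⟨_, Or.inr (Or.inl ⟨r, hr, htrans _ _ _ hru huv, rfl⟩), ?_⟩
        linarith [dist_triangle (p r) (p u) (p v)]
      · refine ⟨_, Or.inr (Or.inr ⟨r, z, q, w, hr, hrz, htrans _ _ _ hq huv, hqw, rfl⟩), ?_⟩
        linarith [dist_triangle (p q) (p u) (p v)]
  · intro u
    simp only [Sum.elim_inr, Sum.elim_inl]
    rw [abs_sub_le_iff]
    constructor
    · have := us_sInf_le_of (RU (α u)) (RT u) ε ⟨1, RU1 _⟩ (RT0 u) ?_
      · linarith
      rintro x (rfl | ⟨r, z, hr, hrz, rfl⟩)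
      · exact ⟨1, RT1 u, by linarith⟩
      · refine ⟨_, Or.inr (Or.inr ⟨r, z, u, u, hr, hrz, hrefl u, hrefl u, rfl⟩), ?_⟩
        linarith [dist_self (p u)]
    · have := us_sInf_le_of (RT u) (RU (α u)) ε ⟨1, RT1 _⟩ (RU0 _) ?_
      · linarith
      rintro x (rfl | ⟨r, hr, hru, rfl⟩ | ⟨r, z, q, w, hr, hrz, hq, hqw, rfl⟩)
      · exact ⟨1, RU1 _, by linarith⟩
      · refine ⟨_, Or.inr ⟨r, u, hr, hru, rfl⟩, ?_⟩
        linarith [hUs (α u)]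
      · refine ⟨_, Or.inr ⟨r, z, hr, hrz, rfl⟩, ?_⟩
        linarith [hUt (α z) (α w) (α u), hI q w u hqw hq]
  · simp only [Sum.elim_inr]
    apply le_antisymm
    · refine csInf_le ⟨0, RT0 s⟩ (Or.inr (Or.inl ⟨s, hrefl s, hrefl s, ?_⟩))
      simp
    · exact le_csInf ⟨1, RT1 s⟩ (RT0 s)
  · simp only [Sum.elim_inr]
    refine le_csInf ⟨1, RT1 t⟩ ?_
    rintro x (rfl | ⟨r, hr, hru, rfl⟩ | ⟨r, z, q, w, hr, hrz, hq, hqw, rfl⟩)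
    · exact hdiam _ _
    · exact dist_triangle _ _ _
    · have := hII r q z w (hlin r q t (htrans _ _ _ hr hst) hq) hrz hqw
      linarith [dist_triangle (p s) (p r) (p t), dist_triangle (p r) (p q) (p t)]

/-- Rounding up a metric. -/
lemma us_discr {S : Type} [MetricSpace S] (X : Set S) (κ : ℝ) (hκ : 0 < κ) :
    ∃ I : MetricSpace X, ∀ u v : X, I.dist u v = (⌈κ * dist (u : S) (v : S)⌉₊ : ℝ) := by
  obtain ⟨D, hD⟩ : ∃ D : X → X → ℝ, ∀ u v, D u v = (⌈κ * dist (u : S) (v : S)⌉₊ : ℝ) := ⟨_, fun _ _ => rfl⟩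
  have h1 : ∀ u, D u u = 0 := by intro u; simp [hD]
  have h2 : ∀ u v, D u v = D v u := by intro u v; simp only [hD, dist_comm]
  have h3 : ∀ u v w, D u w ≤ D u v + D v w := by
    intro u v w
    have h1 : κ * dist u.1 w.1 ≤ κ * dist u.1 v.1 + κ * dist v.1 w.1 := by
      nlinarith [dist_triangle u.1 v.1 w.1]
    have h2 := (Nat.ceil_mono h1).trans (Nat.ceil_add_le (κ * dist u.1 v.1) (κ * dist v.1 w.1))
    rw [hD, hD, hD]
    exact_mod_cast h2
  have h4 : ∀ u v, D u v = 0 → u = v := by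
    intro u v h
    rw [hD] at h
    have h1 : ⌈κ * dist u.1 v.1⌉₊ = 0 := by exact_mod_cast h
    rw [Nat.ceil_eq_zero] at h1
    have : dist u.1 v.1 ≤ 0 := by
      by_contra hc
      push Not at hc
      nlinarith [mul_pos hκ hc]
    exact Subtype.ext (dist_le_zero.mp this)
  exact ⟨{ dist := D, dist_self := h1, dist_comm := h2, dist_triangle := h3,
           eq_of_dist_eq_zero := fun {u v} => h4 u v }, hD⟩

/-- Extension of an isometric map from a dense sequence. -/
lemma us_extend {S : Type} [MetricSpace S] [CompleteSpace S] (x g : ℕ → S)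
    (hx : DenseRange x) (hg : ∀ n k, dist (g n) (g k) = dist (x n) (x k)) :
    ∃ F : S → S, Isometry F ∧ ∀ y n, dist (F y) (g n) = dist y (x n) := by
  have key : ∀ y : S, ∃ w : S, ∀ n, dist w (g n) = dist y (x n) := by
    intro y
    have h1 : ∀ j : ℕ, ∃ n, dist y (x n) < 1 / ((j : ℝ) + 1) := fun j =>
      hx.exists_dist_lt y (by positivity)
    choose ν hν using h1
    have hlim : Filter.Tendsto (fun j => x (ν j)) Filter.atTop (nhds y) := by
      rw [tendsto_iff_dist_tendsto_zero]
      refine squeeze_zero (fun _ => dist_nonneg) (fun j => ?_)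
        (tendsto_one_div_add_atTop_nhds_zero_nat (𝕜 := ℝ))
      rw [dist_comm]; exact (hν j).le
    have hc : CauchySeq (fun j => g (ν j)) := by
      have := hlim.cauchySeq
      rw [Metric.cauchySeq_iff] at this ⊢
      simpa only [hg] using this
    obtain ⟨w, hw⟩ := cauchySeq_tendsto_of_complete hc
    refine ⟨w, fun n => ?_⟩
    have e1 := hw.dist (tendsto_const_nhds (x := g n))
    have e2 := hlim.dist (tendsto_const_nhds (x := x n))
    simp only [hg] at e1
    exact tendsto_nhds_unique e1 e2
  choose F hF using key
  refine ⟨F, ?_, hF⟩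
  refine Isometry.of_dist_eq fun y y' => ?_
  refine le_antisymm ?_ ?_
  · refine le_of_forall_pos_le_add fun e he => ?_
    obtain ⟨n, hn⟩ := hx.exists_dist_lt y' (half_pos he)
    linarith [dist_triangle (F y) (g n) (F y'), hF y n, hF y' n, dist_comm (F y') (g n),
      dist_triangle y y' (x n)]
  · refine le_of_forall_pos_le_add fun e he => ?_
    obtain ⟨n, hn⟩ := hx.exists_dist_lt y' (half_pos he)
    linarith [dist_triangle y (x n) y', hF y n, hF y' n, dist_comm y' (x n),
      dist_triangle (F y) (F y') (g n)]

/-- Numerical estimates for the rounded distance. -/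
lemma us_num (M D d : ℝ) (hM : 1 ≤ M) (hD : 0 ≤ D) (hD1 : D ≤ 1) :
    let r : ℝ := (⌈M * (1 - 1 / (2 * M)) * D⌉₊ : ℝ) / M
    let δ : ℝ := 1 / (8 * M ^ 2)
    let ε : ℝ := 1 / M - 2 * δ
    (|D - d| ≤ 2 * δ → 2 * δ ≤ d → r ≤ d + ε ∧ d ≤ r + ε) ∧
    (|D - d| ≤ 4 * δ → r ≤ d + 2 * ε ∧ d ≤ r + 2 * ε) := by
  intro r δ ε
  have hM0 : 0 < M := by linarith
  set i := 1 / M with hi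
  have hi0 : 0 < i := by positivity
  have hi1 : i ≤ 1 := by rw [hi, div_le_one hM0]; exact hM
  have hδ : δ = i ^ 2 / 8 := by simp only [δ, hi]; field_simp
  have hMi : M * i = 1 := by rw [hi]; field_simp
  set a := M * (1 - 1 / (2 * M)) * D with ha
  have ha' : a = M * D - D / 2 := by rw [ha]; field_simp
  have ha0 : 0 ≤ a := by rw [ha']; nlinarith
  have hai : a * i = D - D * i / 2 := by
    rw [ha']; linear_combination D * hMi
  have hr : r = (⌈a⌉₊ : ℝ) * i := by simp only [r, hi]; ring
  have hr1 : a * i ≤ r := by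
    rw [hr]; exact mul_le_mul_of_nonneg_right (Nat.le_ceil a) hi0.le
  have hr2 : r ≤ a * i + i := by
    rw [hr]; nlinarith [(Nat.ceil_lt_add_one ha0).le]
  have hε : ε = i - i ^ 2 / 4 := by simp only [ε, hδ]; ring
  have hii : i ^ 2 ≤ i := by nlinarith
  have hDi : D * i ≤ i := by nlinarith
  have hDi0 : 0 ≤ D * i := by positivity
  rw [hε, hδ]
  constructor
  · intro h1 h2
    rw [abs_le] at h1
    constructor
    · by_cases hc : ⌈a⌉₊ ≤ 1
      · have : r ≤ i := by
          rw [hr]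
          have : (⌈a⌉₊ : ℝ) ≤ 1 := by exact_mod_cast hc
          nlinarith
        linarith
      · have : 1 < a := by
          by_contra h
          push Not at h
          exact hc (Nat.ceil_le.mpr (by simpa using h))
        have h3 : i ≤ D := by nlinarith
        have h4 : i ^ 2 ≤ D * i := by nlinarith
        linarith
    · linarith
  · intro h1
    rw [abs_le] at h1
    constructor <;> linarith

/-- Nodes of the tree of partial realisations. -/
def UsNode {U : Type} (r : ℕ → ℕ → ℝ) (dU : U → U → ℝ) (u0 : U) : Type :=
  {t : ℕ × List U // ∀ i j, i ≤ t.1 → j ≤ t.1 → dU (t.2.getD i u0) (t.2.getD j u0) = r i j}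

/-- Length of a node. -/
def UsNode.lev {U : Type} {r : ℕ → ℕ → ℝ} {dU : U → U → ℝ} {u0 : U} (t : UsNode r dU u0) : ℕ :=
  t.1.1

/-- Entry of a node. -/
def UsNode.ent {U : Type} {r : ℕ → ℕ → ℝ} {dU : U → U → ℝ} {u0 : U} (t : UsNode r dU u0)
    (i : ℕ) : U := t.1.2.getD i u0

/-- Initial segment relation. -/
def UsNode.le {U : Type} {r : ℕ → ℕ → ℝ} {dU : U → U → ℝ} {u0 : U} (s t : UsNode r dU u0) :
    Prop := s.lev ≤ t.lev ∧ ∀ i, i ≤ s.lev → s.ent i = t.ent i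

lemma us_dich {U S : Type} [MetricSpace S] (r : ℕ → ℕ → ℝ) (dU : U → U → ℝ) (u0 : U)
    (x : ℕ → S) (c : ℕ → ℕ) (hc : ∀ n, c n ≤ n) (ε : ℝ)
    (F2 : ∀ n k, k < c n → |r (c n) k - dist (x n) (x k)| ≤ ε)
    (F3 : ∀ n l, |r (c n) (c l) - dist (x n) (x l)| ≤ 2 * ε)
    (s z w : UsNode r dU u0) (hz : s.le z) (hw : s.le w) :
    |dU (z.ent (c z.lev)) (w.ent (c w.lev)) - dist (x z.lev) (x w.lev)| ≤ 2 * ε ∨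
    (|dU (z.ent (c z.lev)) (s.ent s.lev) - dist (x z.lev) (x s.lev)| ≤ ε ∧
     |dU (w.ent (c w.lev)) (s.ent s.lev) - dist (x w.lev) (x s.lev)| ≤ ε) := by
  have P : ∀ (t : UsNode r dU u0) i j, i ≤ t.lev → j ≤ t.lev → dU (t.ent i) (t.ent j) = r i j :=
    fun t => t.2
  by_cases h1 : c z.lev ≤ s.lev
  · left
    rw [← hz.2 _ h1, hw.2 _ h1, P w _ _ (h1.trans hw.1) (hc _)]
    exact F3 _ _
  by_cases h2 : c w.lev ≤ s.lev
  · left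
    rw [← hw.2 _ h2, hz.2 _ h2, P z _ _ (hc _) (h2.trans hz.1)]
    exact F3 _ _
  · right
    push Not at h1 h2
    constructor
    · rw [hz.2 _ le_rfl, P z _ _ (hc _) hz.1]; exact F2 _ _ h1
    · rw [hw.2 _ le_rfl, P w _ _ (hc _) hw.1]; exact F2 _ _ h2

lemma us_ambient {U S : Type} [Countable U] [MetricSpace S] (r : ℕ → ℕ → ℝ) (dU : U → U → ℝ)
    (u0 : U) (hUs : ∀ a, dU a a = 0) (hUc : ∀ a b, dU a b = dU b a) (hU0 : ∀ a b, 0 ≤ dU a b)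
    (hUt : ∀ a b c, dU a c ≤ dU a b + dU b c)
    (x : ℕ → S) (c : ℕ → ℕ) (hc : ∀ n, c n ≤ n) (ε : ℝ) (hε : 0 ≤ ε)
    (F2 : ∀ n k, k < c n → |r (c n) k - dist (x n) (x k)| ≤ ε)
    (F3 : ∀ n l, |r (c n) (c l) - dist (x n) (x l)| ≤ 2 * ε)
    (hdiam : ∀ x y : S, dist x y ≤ 1)
    (hunivS : ∀ (Y : Type) [MetricSpace Y] [TopologicalSpace.SeparableSpace Y],
      (∀ x y : Y, dist x y ≤ 1) → ∃ e : Y → S, Isometry e) :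
    ∃ (A : U → S) (B : UsNode r dU u0 → S),
      (∀ s t, s.le t → dist (B s) (B t) = dist (x s.lev) (x t.lev)) ∧
      ∀ t, dist (B t) (A (t.ent (c t.lev))) ≤ ε := by
  have core := us_core (T := UsNode r dU u0) UsNode.le (fun t => x t.lev)
    (fun t => t.ent (c t.lev)) dU ε hε hU0 hUs hUt
    (fun t => ⟨le_rfl, fun _ _ => rfl⟩)
    (fun a b d h1 h2 => ⟨h1.1.trans h2.1, fun i hi =>
      (h1.2 i hi).trans (h2.2 i (hi.trans h1.1))⟩)
    (fun a b d h1 h2 => by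
      rcases le_total a.lev b.lev with h | h
      · exact Or.inl ⟨h, fun i hi => (h1.2 i hi).trans (h2.2 i (hi.trans h)).symm⟩
      · exact Or.inr ⟨h, fun i hi => (h2.2 i hi).trans (h1.2 i (hi.trans h)).symm⟩)
    hdiam
    (fun s z w hz hw => by
      rcases us_dich r dU u0 x c hc ε F2 F3 s z w hz hw with h | ⟨h, h'⟩
      · rw [abs_le] at h
        linarith [dist_triangle (x z.lev) (x s.lev) (x w.lev)]
      · rw [abs_le] at h h'
        linarith [hUt (z.ent (c z.lev)) (s.ent s.lev) (w.ent (c w.lev)),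
          hUc (w.ent (c w.lev)) (s.ent s.lev), dist_comm (x w.lev) (x s.lev)])
    (fun s q z w hsq hz hw => by
      rcases hsq with hsq | hsq
      · rcases us_dich r dU u0 x c hc ε F2 F3 s z w hz ⟨hsq.1.trans hw.1, fun i hi =>
          (hsq.2 i hi).trans (hw.2 i (hi.trans hsq.1))⟩ with h | ⟨h, h'⟩
        · rw [abs_le] at h
          linarith [dist_triangle (x s.lev) (x z.lev) (x q.lev),
            dist_triangle (x z.lev) (x w.lev) (x q.lev)]
        · rw [abs_le] at h h'
          linarith [hUt (w.ent (c w.lev)) (z.ent (c z.lev)) (s.ent s.lev),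
            hUc (w.ent (c w.lev)) (z.ent (c z.lev)), dist_comm (x w.lev) (x s.lev),
            dist_comm (x z.lev) (x s.lev), dist_triangle (x s.lev) (x w.lev) (x q.lev)]
      · rcases us_dich r dU u0 x c hc ε F2 F3 q z w ⟨hsq.1.trans hz.1, fun i hi =>
          (hsq.2 i hi).trans (hz.2 i (hi.trans hsq.1))⟩ hw with h | ⟨h, h'⟩
        · rw [abs_le] at h
          linarith [dist_triangle (x s.lev) (x z.lev) (x q.lev),
            dist_triangle (x z.lev) (x w.lev) (x q.lev)]
        · rw [abs_le] at h h'
          linarith [hUt (z.ent (c z.lev)) (w.ent (c w.lev)) (q.ent q.lev),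
            dist_comm (x z.lev) (x s.lev), dist_triangle (x s.lev) (x z.lev) (x q.lev)])
  have : Countable (UsNode r dU u0) := by unfold UsNode; infer_instance
  let 𝓕 : Type := {f : U ⊕ UsNode r dU u0 → ℝ // (∀ w, 0 ≤ f w ∧ f w ≤ 1) ∧
      (∀ u v : UsNode r dU u0, u.le v →
        |f (Sum.inr u) - f (Sum.inr v)| ≤ dist (x u.lev) (x v.lev)) ∧
      (∀ u : UsNode r dU u0, |f (Sum.inr u) - f (Sum.inl (u.ent (c u.lev)))| ≤ ε)}
  let _ : TopologicalSpace 𝓕 := ⊥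
  have : DiscreteTopology 𝓕 := ⟨rfl⟩
  let ev : U ⊕ UsNode r dU u0 → BoundedContinuousFunction 𝓕 ℝ := fun z =>
    BoundedContinuousFunction.ofNormedAddCommGroupDiscrete (fun f => f.1 z) 1
      (fun f => by rw [Real.norm_eq_abs, abs_le]; constructor <;> linarith [f.2.1 z])
  have hev : ∀ z f, ev z f = f.1 z := fun z f => rfl
  have : Countable (Set.range ev) := (Set.countable_range ev).to_subtype
  obtain ⟨j, hj⟩ := hunivS (Set.range ev) (by
    rintro ⟨_, a, rfl⟩ ⟨_, b, rfl⟩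
    rw [Subtype.dist_eq]
    refine (BoundedContinuousFunction.dist_le zero_le_one).2 fun f => ?_
    rw [hev, hev, Real.dist_eq, abs_le]
    constructor <;> linarith [f.2.1 a, f.2.1 b])
  have hd : ∀ a b, dist (j ⟨ev a, a, rfl⟩) (j ⟨ev b, b, rfl⟩) = dist (ev a) (ev b) :=
    fun a b => hj.dist_eq _ _
  refine ⟨fun a => j ⟨ev (Sum.inl a), _, rfl⟩, fun t => j ⟨ev (Sum.inr t), _, rfl⟩, ?_, ?_⟩
  · intro s t hst
    rw [hd]
    apply le_antisymm
    · refine (BoundedContinuousFunction.dist_le dist_nonneg).2 fun f => ?_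
      rw [hev, hev, Real.dist_eq]
      exact f.2.2.1 s t hst
    · obtain ⟨f, hf1, hf2, hf3, hf4, hf5⟩ := core s t hst
      have := BoundedContinuousFunction.dist_coe_le_dist (f := ev (Sum.inr s))
        (g := ev (Sum.inr t)) (⟨f, hf1, hf2, hf3⟩ : 𝓕)
      rw [hev, hev, Real.dist_eq, abs_sub_comm] at this
      simp only [hf4, sub_zero] at this
      exact (hf5.trans (le_abs_self _)).trans this
  · intro t
    rw [hd]
    refine (BoundedContinuousFunction.dist_le hε).2 fun f => ?_
    rw [hev, hev, Real.dist_eq]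
    exact f.2.2.2 t

/-- If `m ≥ 1` and the discretized Urysohn sphere `S_m = (U_m, d/m)` is indivisible,
then the Urysohn sphere `S` is `1/m`-indivisible: for every finite partition of `S`
there is a piece `Γ` such that `(Γ)_{1/m}` contains an isometric copy of `S`. -/
theorem Sm_indivisible_implies_S_eps_indivisible (m : ℕ) (hm : 1 ≤ m)
    (Um : Type) [MetricSpace Um] [Countable Um]
    (hdistUm : ∀ x y : Um, x ≠ y → ∃ k : ℕ, 1 ≤ k ∧ k ≤ m ∧ dist x y = k)
    (hultraUm : ∀ (F : Finset Um) (φ : Um → Um),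
      (∀ x ∈ F, ∀ y ∈ F, dist (φ x) (φ y) = dist x y) →
      ∃ ψ : Um ≃ᵢ Um, ∀ x ∈ F, ψ x = φ x)
    (hunivUm : ∀ (Y : Type) [MetricSpace Y] [Countable Y],
      (∀ x y : Y, x ≠ y → ∃ k : ℕ, 1 ≤ k ∧ k ≤ m ∧ dist x y = k) →
      ∃ e : Y → Um, Isometry e)
    -- indivisibility of S_m = (U_m, d/m); isometric copies of S_m are exactly
    -- the maps multiplying the rescaled distance `d/m` (equivalently `d`) by 1
    (hindiv : ∀ (k : ℕ) (c : Um → Fin k), ∃ (i : Fin k) (e : Um → Um),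
      (∀ x y : Um, dist (e x) (e y) / m = dist x y / m) ∧ ∀ x, c (e x) = i)
    (S : Type) [MetricSpace S] [CompleteSpace S] [TopologicalSpace.SeparableSpace S]
    (hdiam : ∀ x y : S, dist x y ≤ 1)
    (hultraS : ∀ (F : Finset S) (φ : S → S),
      (∀ x ∈ F, ∀ y ∈ F, dist (φ x) (φ y) = dist x y) →
      ∃ ψ : S ≃ᵢ S, ∀ x ∈ F, ψ x = φ x)
    (hunivS : ∀ (Y : Type) [MetricSpace Y] [TopologicalSpace.SeparableSpace Y],
      (∀ x y : Y, dist x y ≤ 1) → ∃ e : Y → S, Isometry e) :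
    ∀ (k : ℕ) (c : S → Fin k), ∃ (i : Fin k) (e : S → S), Isometry e ∧
      ∀ x : S, ∃ y : S, c y = i ∧ dist (e x) y ≤ 1 / m := by
  intro K col
  have hM : (1 : ℝ) ≤ m := by exact_mod_cast hm
  obtain ⟨M, hMm⟩ : ∃ M : ℝ, M = m := ⟨_, rfl⟩
  rw [← hMm] at hM hindiv ⊢
  have hM0 : 0 < M := by linarith
  obtain ⟨δ, hδ⟩ : ∃ δ : ℝ, δ = 1 / (8 * M ^ 2) := ⟨_, rfl⟩
  obtain ⟨ε, hε⟩ : ∃ ε : ℝ, ε = 1 / M - 2 * δ := ⟨_, rfl⟩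
  have hδ0 : 0 < δ := by rw [hδ]; positivity
  have hε0 : 0 ≤ ε := by
    have : 2 * δ ≤ 1 / M := by
      rw [hδ, mul_one_div, div_le_div_iff₀ (by positivity) hM0]
      nlinarith
    linarith
  obtain ⟨jS, -⟩ := hunivS PUnit (by intro a b; simp)
  obtain ⟨jU, -⟩ := hunivUm PUnit (by intro a b h; exact absurd rfl h)
  let u0 : Um := jU PUnit.unit
  have : Nonempty S := ⟨jS PUnit.unit⟩
  obtain ⟨x, hx⟩ := TopologicalSpace.exists_dense_seq S
  obtain ⟨κ, hκ⟩ : ∃ κ : ℝ, κ = M * (1 - 1 / (2 * M)) := ⟨_, rfl⟩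
  have hκ' : κ = M - 1 / 2 := by rw [hκ]; field_simp
  have hκ0 : 0 < κ := by linarith
  let r : ℕ → ℕ → ℝ := fun i j => (⌈κ * dist (x i) (x j)⌉₊ : ℝ) / M
  have hex : ∀ n, ∃ k, dist (x n) (x k) < 2 * δ := fun n => ⟨n, by rw [dist_self]; positivity⟩
  classical
  let c : ℕ → ℕ := fun n => Nat.find (hex n)
  have hc : ∀ n, c n ≤ n := fun n => Nat.find_min' (hex n) (by rw [dist_self]; positivity)
  have hc1 : ∀ n, dist (x n) (x (c n)) < 2 * δ := fun n => Nat.find_spec (hex n)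
  have hc2 : ∀ n k, k < c n → 2 * δ ≤ dist (x n) (x k) := fun n k hk =>
    not_lt.1 (Nat.find_min (hex n) hk)
  have num := fun i j d => us_num M (dist (x i) (x j)) d hM dist_nonneg (hdiam _ _)
  simp only [← hκ, ← hδ, ← hε] at num
  have F2 : ∀ n k, k < c n → |r (c n) k - dist (x n) (x k)| ≤ ε := by
    intro n k hk
    have := (num (c n) k (dist (x n) (x k))).1 (by
      rw [abs_le]
      constructor <;> linarith [hc1 n, dist_triangle (x n) (x (c n)) (x k),
        dist_triangle (x (c n)) (x n) (x k), dist_comm (x n) (x (c n))]) (hc2 n k hk)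
    rw [abs_le]
    constructor <;> linarith [this.1, this.2]
  have F3 : ∀ n l, |r (c n) (c l) - dist (x n) (x l)| ≤ 2 * ε := by
    intro n l
    have := (num (c n) (c l) (dist (x n) (x l))).2 (by
      have := dist_dist_dist_le (x (c n)) (x (c l)) (x n) (x l)
      rw [Real.dist_eq] at this
      linarith [hc1 n, hc1 l, dist_comm (x n) (x (c n)), dist_comm (x l) (x (c l))])
    rw [abs_le]
    constructor <;> linarith [this.1, this.2]
  obtain ⟨A, B, hB, hBA⟩ := us_ambient (U := Um) r (fun a b => dist a b / M) u0
    (by intro a; simp) (by intro a b; simp only [dist_comm]) (by intro a b; positivity)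
    (by intro a b d; rw [← add_div]; exact div_le_div_of_nonneg_right (dist_triangle _ _ _) hM0.le)
    x c hc ε hε0 F2 F3 hdiam hunivS
  obtain ⟨i, e, he, hei⟩ := hindiv K (fun a => col (A a))
  obtain ⟨I, hI⟩ := us_discr (Set.range x) κ hκ0
  have : Countable (Set.range x) := (Set.countable_range x).to_subtype
  have hI2 : ∀ a b : Set.range x, a ≠ b → ∃ k : ℕ, 1 ≤ k ∧ k ≤ m ∧ I.dist a b = k := by
    intro a b hab
    refine ⟨_, ?_, ?_, hI a b⟩
    · exact Nat.one_le_iff_ne_zero.2 (Nat.ceil_pos.2 (mul_pos hκ0 (dist_pos.2 (fun h => hab (Subtype.ext h))))).ne'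
    · rw [Nat.ceil_le, ← hMm]
      have : dist a.1 b.1 ≤ 1 := hdiam _ _
      nlinarith
  obtain ⟨e0, he0⟩ := @hunivUm (Set.range x) I _ hI2
  have he0' : ∀ a b : Set.range x, dist (e0 a) (e0 b) = (⌈κ * dist a.1 b.1⌉₊ : ℝ) := fun a b =>
    (@Isometry.dist_eq _ _ I.toPseudoMetricSpace _ e0 he0 a b).trans (hI a b)
  let a : ℕ → Um := fun n => e (e0 ⟨x n, n, rfl⟩)
  have ha : ∀ p q, dist (a p) (a q) / M = r p q := by
    intro p q
    rw [he, he0']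
  have hent : ∀ n p, p ≤ n → ((List.range (n + 1)).map a).getD p u0 = a p := by
    intro n p hp
    have : p < n + 1 := by omega
    simp [List.getD, this]
  let τ : ℕ → UsNode r (fun a b : Um => dist a b / M) u0 := fun n =>
    ⟨(n, (List.range (n + 1)).map a), fun p q hp hq => by
      simp only at hp hq ⊢
      rw [hent n p hp, hent n q hq, ha]⟩
  have hτl : ∀ n, (τ n).lev = n := fun n => rfl
  have hτe : ∀ n p, p ≤ n → (τ n).ent p = a p := fun n p hp => hent n p hp
  have hle : ∀ n k, n ≤ k → (τ n).le (τ k) := fun n k h =>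
    ⟨h, fun p hp => by rw [hτe n p hp, hτe k p (le_trans hp h)]⟩
  obtain ⟨F, hF, hFg⟩ := us_extend x (fun n => B (τ n)) hx (by
    intro n k
    rcases le_total n k with h | h
    · exact hB _ _ (hle n k h)
    · rw [dist_comm, dist_comm (x n)]; exact hB _ _ (hle k n h))
  refine ⟨i, F, hF, fun y => ?_⟩
  obtain ⟨n, hn⟩ := hx.exists_dist_lt y (ε := 2 * δ) (by positivity)
  refine ⟨A (a (c n)), hei _, ?_⟩
  have h1 := hBA (τ n)
  rw [hτl, hτe n _ (hc n)] at h1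
  linarith [dist_triangle (F y) (B (τ n)) (A (a (c n))), hFg y n]
end
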